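/- arXiv:2602.09382 — 2 statements merged into one kernel-verified Lean document; each statement's English description precedes it below -/
import Mathlib

section
/- As h → 0⁺, sup_{r∈[0,1]} |α_h(r) − (4−6r)| → 0 and sup_{r∈[0,1]} |β_h(r) − (12r−6)| → 0. (Lemma 1 (continuity of the detrending coefficients) of the paper.) -/
open Filter Topology

/-- `D h = h(1−e^{−2h}) − 2(1−e^{−h})²`. -/
noncomputable def D (h : ℝ) : ℝ :=
  h * (1 - Real.exp (-2 * h)) - 2 * (1 - Real.exp (-h)) ^ 2

/-- The detrending coefficient `α_h(r)`. -/
noncomputable def alphaCoeff (h r : ℝ) : ℝ :=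
  h * (1 - Real.exp (-2 * h) - 2 * (1 - Real.exp (-h)) * Real.exp (-h * r) +
      2 * h * Real.exp (-h * r) - 2 * (1 - Real.exp (-h))) / D h

/-- The detrending coefficient `β_h(r)`. -/
noncomputable def betaCoeff (h r : ℝ) : ℝ :=
  2 * h ^ 2 * ((1 - Real.exp (-h)) - h * Real.exp (-h * r)) / D h

/-!
Since `D h` vanishes to fourth order at `h = 0`, expand the exponentials with the continuous
functions defined by `φ₀ = exp` and `φₖ(x) = 1 / k! + x φₖ₊₁(x)`. The factor `h ^ 4` then splits off
exactly from `D h` and from both numerators, so for `h ≠ 0` the coefficients coincide with functions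
of `(h, r)` that are jointly continuous at every `(0, r)`. Joint continuity makes the convergence as
`h → 0` uniform on compact sets of `r`, and the limits are the values at `h = 0`.
-/

open scoped Uniformity

section UniformConvergence

variable {ι X Y β : Type*}

lemma tendsto_iSup_dist_of_tendstoUniformlyOn [PseudoMetricSpace β] {F : ι → Y → β} {f : Y → β}
    {p : Filter ι} {s : Set Y} (hF : TendstoUniformlyOn F f p s) :
    Tendsto (fun i => ⨆ y : s, dist (F i y) (f y)) p (𝓝 0) := by
  refine Metric.nhds_basis_closedBall.tendsto_right_iff.2 fun ε hε => ?_
  filter_upwards [Metric.tendstoUniformlyOn_iff.1 hF ε hε] with i hi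
  have hle : ⨆ y : s, dist (F i y) (f y) ≤ ε :=
    Real.iSup_le (fun y => dist_comm (f y) (F i y) ▸ (hi y y.2).le) hε.le
  rwa [mem_closedBall_zero_iff, Real.norm_of_nonneg (Real.iSup_nonneg fun _ => dist_nonneg)]

variable [TopologicalSpace X] [TopologicalSpace Y] [UniformSpace β]

lemma tendstoLocallyUniformlyOn_of_continuousAt_uncurry {G : X → Y → β} {x₀ : X} {s : Set Y}
    (hG : ∀ y ∈ s, ContinuousAt (Function.uncurry G) (x₀, y)) :
    TendstoLocallyUniformlyOn G (G x₀) (𝓝 x₀) s := by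
  refine tendstoLocallyUniformlyOn_iff_forall_tendsto.2 fun y hy => ?_
  have hslice : ContinuousAt (fun q : X × Y => G x₀ q.2) (x₀, y) :=
    (hG y hy).comp' (f := fun q : X × Y => (x₀, q.2)) (x := (x₀, y)) (by fun_prop)
  have hpair : Tendsto (fun q : X × Y => (G x₀ q.2, G q.1 q.2)) (𝓝 x₀ ×ˢ 𝓝 y) (𝓤 β) := by
    rw [← nhds_prod_eq]
    exact (hslice.prodMk (hG y hy)).tendsto.mono_right (nhds_le_uniformity _)
  exact hpair.mono_left (prod_mono_right _ nhdsWithin_le_nhds)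

lemma tendstoUniformlyOn_nhdsNE_of_eq_of_continuousAt_uncurry {F G : X → Y → β} {x₀ : X}
    {K : Set Y} (hK : IsCompact K) (hFG : ∀ x ≠ x₀, F x = G x)
    (hG : ∀ y ∈ K, ContinuousAt (Function.uncurry G) (x₀, y)) :
    TendstoUniformlyOn F (G x₀) (𝓝[≠] x₀) K := by
  have hGK : TendstoUniformlyOn G (G x₀) (𝓝 x₀) K :=
    (tendstoLocallyUniformlyOn_iff_tendstoUniformlyOn_of_compact hK).1
      (tendstoLocallyUniformlyOn_of_continuousAt_uncurry hG)
  intro u hu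
  filter_upwards [nhdsWithin_le_nhds (hGK u hu), self_mem_nhdsWithin] with x hx hne
  rwa [hFG x hne]

end UniformConvergence

section ExpPhi

/-- The function `φₖ(x) = (exp x - ∑ i < k, x ^ i / i!) / x ^ k` of exponential integrators.
Iterating `dslope` rather than dividing by `x ^ k` gives its continuous extension `1 / k!` at
`x = 0`. -/
noncomputable def expPhi (k : ℕ) : ℝ → ℝ :=
  (Function.swap dslope 0)^[k] Real.exp

lemma expPhi_zero : expPhi 0 = Real.exp := rfl

lemma expPhi_succ (k : ℕ) : expPhi (k + 1) = dslope (expPhi k) 0 :=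
  Function.iterate_succ_apply' _ _ _

lemma hasFPowerSeriesAt_expPhi (k : ℕ) :
    HasFPowerSeriesAt (expPhi k)
      (FormalMultilinearSeries.fslope^[k] (NormedSpace.expSeries ℝ ℝ)) 0 := by
  have hexp := NormedSpace.exp_hasFPowerSeriesAt_zero (𝕂 := ℝ) (𝔸 := ℝ)
  rw [← Real.exp_eq_exp_ℝ] at hexp
  exact hexp.has_fpower_series_iterate_dslope_fslope k

lemma expPhi_apply_zero (k : ℕ) : expPhi k 0 = 1 / k.factorial := by
  rw [← (hasFPowerSeriesAt_expPhi k).coeff_zero 1, ← FormalMultilinearSeries.coeff,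
    FormalMultilinearSeries.coeff_iterate_fslope, zero_add]
  simp [FormalMultilinearSeries.coeff, NormedSpace.expSeries, Pi.one_def]

lemma expPhi_eq_add_mul (k : ℕ) (x : ℝ) :
    expPhi k x = 1 / k.factorial + x * expPhi (k + 1) x := by
  have hslope := sub_smul_dslope (expPhi k) 0 x
  rw [← expPhi_succ, expPhi_apply_zero, sub_zero, smul_eq_mul] at hslope
  linarith

@[fun_prop]
lemma continuous_expPhi (k : ℕ) : Continuous (expPhi k) := by
  induction k with
  | zero => exact Real.continuous_exp
  | succ k ih =>
    rw [expPhi_succ, ← continuousOn_univ, continuousOn_dslope univ_mem]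
    exact ⟨ih.continuousOn, (hasFPowerSeriesAt_expPhi k).differentiableAt⟩

lemma exp_eq_one_add_mul_expPhi (x : ℝ) : Real.exp x = 1 + x * expPhi 1 x := by
  simpa [expPhi_zero] using expPhi_eq_add_mul 0 x

lemma expPhi_one_eq (x : ℝ) : expPhi 1 x = 1 + x * expPhi 2 x := by
  simpa using expPhi_eq_add_mul 1 x

lemma expPhi_two_eq (x : ℝ) : expPhi 2 x = 1 / 2 + x * expPhi 3 x := by
  simpa using expPhi_eq_add_mul 2 x

end ExpPhi

section Coefficients

/-- The continuous extension of `D h / h ^ 4` to `h = 0`. -/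
noncomputable def normalizedD (h : ℝ) : ℝ :=
  expPhi 1 (-h) * (1 / 2 - (h + 2) * expPhi 3 (-h))

/-- The extension of `alphaCoeff` to `h = 0`, with the common factor `h ^ 4` of numerator and
denominator cancelled. -/
noncomputable def alphaExt (h r : ℝ) : ℝ :=
  (2 * expPhi 2 (-h) * (1 - r * expPhi 1 (-h * r)) - h * expPhi 2 (-h) ^ 2 - 2 * expPhi 3 (-h)) /
    normalizedD h

/-- The extension of `betaCoeff` to `h = 0`, with the common factor `h ^ 4` of numerator and
denominator cancelled. -/
noncomputable def betaExt (h r : ℝ) : ℝ :=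
  2 * (r * expPhi 1 (-h * r) - expPhi 2 (-h)) / normalizedD h

lemma exp_neg_two_mul_eq_sq (h : ℝ) : Real.exp (-2 * h) = Real.exp (-h) ^ 2 := by
  rw [← Real.exp_nat_mul]
  ring_nf

lemma D_eq_pow_mul_normalizedD (h : ℝ) : D h = h ^ 4 * normalizedD h := by
  have hfactor : D h = h ^ 2 * expPhi 1 (-h) * (2 - (h + 2) * expPhi 1 (-h)) := by
    rw [D, exp_neg_two_mul_eq_sq, exp_eq_one_add_mul_expPhi]
    ring
  have hcancel : 2 - (h + 2) * expPhi 1 (-h) = h ^ 2 * (1 / 2 - (h + 2) * expPhi 3 (-h)) := by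
    rw [expPhi_one_eq, expPhi_two_eq]
    ring
  rw [hfactor, hcancel, normalizedD]
  ring

lemma alphaCoeff_eq_alphaExt {h : ℝ} (hh : h ≠ 0) : alphaCoeff h = alphaExt h := by
  funext r
  rw [alphaExt, ← mul_div_mul_left _ _ (pow_ne_zero 4 hh), ← D_eq_pow_mul_normalizedD, alphaCoeff,
    exp_neg_two_mul_eq_sq, exp_eq_one_add_mul_expPhi (-h), exp_eq_one_add_mul_expPhi (-h * r),
    expPhi_one_eq (-h), expPhi_two_eq]
  ring

lemma betaCoeff_eq_betaExt {h : ℝ} (hh : h ≠ 0) : betaCoeff h = betaExt h := by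
  funext r
  rw [betaExt, ← mul_div_mul_left _ _ (pow_ne_zero 4 hh), ← D_eq_pow_mul_normalizedD, betaCoeff,
    exp_eq_one_add_mul_expPhi (-h), exp_eq_one_add_mul_expPhi (-h * r), expPhi_one_eq (-h)]
  ring

lemma normalizedD_zero : normalizedD 0 = 1 / 6 := by
  norm_num [normalizedD, expPhi_apply_zero, Nat.factorial]

lemma alphaExt_zero (r : ℝ) : alphaExt 0 r = 4 - 6 * r := by
  simp only [alphaExt, normalizedD_zero, neg_zero, zero_mul, expPhi_apply_zero, Nat.factorial]
  push_cast
  ring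

lemma betaExt_zero (r : ℝ) : betaExt 0 r = 12 * r - 6 := by
  simp only [betaExt, normalizedD_zero, neg_zero, zero_mul, expPhi_apply_zero, Nat.factorial]
  push_cast
  ring

@[fun_prop]
lemma continuous_normalizedD : Continuous normalizedD := by
  unfold normalizedD
  fun_prop

lemma continuousAt_uncurry_alphaExt (r : ℝ) :
    ContinuousAt (Function.uncurry alphaExt) (0, r) := by
  have hden : normalizedD 0 ≠ 0 := by norm_num [normalizedD_zero]
  unfold alphaExt Function.uncurry
  fun_prop (disch := exact hden)

lemma continuousAt_uncurry_betaExt (r : ℝ) :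
    ContinuousAt (Function.uncurry betaExt) (0, r) := by
  have hden : normalizedD 0 ≠ 0 := by norm_num [normalizedD_zero]
  unfold betaExt Function.uncurry
  fun_prop (disch := exact hden)

lemma tendstoUniformlyOn_alphaCoeff {K : Set ℝ} (hK : IsCompact K) :
    TendstoUniformlyOn alphaCoeff (fun r => 4 - 6 * r) (𝓝[≠] 0) K :=
  (tendstoUniformlyOn_nhdsNE_of_eq_of_continuousAt_uncurry hK (fun _ => alphaCoeff_eq_alphaExt)
    fun r _ => continuousAt_uncurry_alphaExt r).congr_right fun r _ => alphaExt_zero r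

lemma tendstoUniformlyOn_betaCoeff {K : Set ℝ} (hK : IsCompact K) :
    TendstoUniformlyOn betaCoeff (fun r => 12 * r - 6) (𝓝[≠] 0) K :=
  (tendstoUniformlyOn_nhdsNE_of_eq_of_continuousAt_uncurry hK (fun _ => betaCoeff_eq_betaExt)
    fun r _ => continuousAt_uncurry_betaExt r).congr_right fun r _ => betaExt_zero r

end Coefficients

theorem stmt_11_general {K : Set ℝ} (hK : IsCompact K) :
    Tendsto (fun h : ℝ => ⨆ r : K, |alphaCoeff h r - (4 - 6 * (r : ℝ))|) (𝓝[≠] 0) (𝓝 0) ∧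
    Tendsto (fun h : ℝ => ⨆ r : K, |betaCoeff h r - (12 * (r : ℝ) - 6)|) (𝓝[≠] 0) (𝓝 0) :=
  ⟨tendsto_iSup_dist_of_tendstoUniformlyOn (tendstoUniformlyOn_alphaCoeff hK),
    tendsto_iSup_dist_of_tendstoUniformlyOn (tendstoUniformlyOn_betaCoeff hK)⟩

theorem stmt_11 :
    Tendsto (fun h : ℝ => ⨆ r : Set.Icc (0 : ℝ) 1, |alphaCoeff h r - (4 - 6 * (r : ℝ))|)
      (𝓝[>] 0) (𝓝 0) ∧
    Tendsto (fun h : ℝ => ⨆ r : Set.Icc (0 : ℝ) 1, |betaCoeff h r - (12 * (r : ℝ) - 6)|)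
      (𝓝[>] 0) (𝓝 0) :=
  (stmt_11_general isCompact_Icc).imp (·.mono_left (nhdsGT_le_nhdsNE 0))
    (·.mono_left (nhdsGT_le_nhdsNE 0))
end

section
/- Let (Ω, F, P) be a probability space, let M > 0, let ρ ∈ (0,1), and let U_1, U_2, … be real-valued random variables such that E|U_j U_k| ≤ M for all j, k ≥ 1 (in particular each U_j is square-integrable). For l ≥ 1 define Ũ_l = Σ_{j=1}^l ρ^{l−j} U_j. Then for all integers i and m ≥ 0 with m < i − 1: E| ρ^{2m+2}(Ũ_{i−m−1}² − E[Ũ_{i−m−1}²]) + 2ρ^{m+1} Ũ_{i−m−1} Σ_{j=i−m}^{i} ρ^{i−j} U_j | ≤ 2M(1−ρ)^{−2}(ρ^{2m+2} + ρ^{m+1}). (The L¹-near-epoch-dependence bound established in Section SM.3.2.3 of the paper.) -/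
open MeasureTheory

/-- `Ũ_l = Σ_{j=1}^l ρ^{l−j} U_j`. -/
noncomputable def Utilde {Ω : Type*} (ρ : ℝ) (U : ℕ → Ω → ℝ) (l : ℕ) (ω : Ω) : ℝ :=
  ∑ j ∈ Finset.Icc 1 l, ρ ^ (l - j) * U j ω

/-!
Splitting the sum at `i - m` gives `Ũ_i = ρ^(m+1) Ũ_{i-m-1} + S`, where `S` is the sum over the
last `m + 1` innovations, so the integrand of the theorem is `Ũ_i² - S²` with its quadratic term
centred. Centring at most doubles an `L¹` norm. It remains to bound `E|Ũ²|` and `E|Ũ S|`: expanding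
each product into a double sum, the triangle inequality in `L¹` and `E|U_j U_k| ≤ M` leave `M` times
the product of two partial sums of the geometric series.
-/

lemma sum_Icc_pow_sub_le {r : ℝ} (hr₀ : 0 ≤ r) (hr₁ : r < 1) (a l : ℕ) :
    ∑ j ∈ Finset.Icc a l, r ^ (l - j) ≤ (1 - r)⁻¹ := by
  have reflect_injOn : Set.InjOn (fun j => l - j) (Finset.Icc a l) := fun j hj k hk hjk => by
    simp only [Finset.coe_Icc, Set.mem_Icc] at hj hk hjk
    lia
  rw [← Finset.sum_image (f := fun k => r ^ k) reflect_injOn]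
  exact sum_le_hasSum _ (fun k _ => pow_nonneg hr₀ k) (hasSum_geometric_of_lt_one hr₀ hr₁)

section LOne

variable {Ω ι κ 𝕜 E : Type*} [MeasurableSpace Ω] {μ : Measure Ω} [NormedField 𝕜]
  [NormedAddCommGroup E]

lemma integral_norm_sub_integral_le [NormedSpace ℝ E] [IsProbabilityMeasure μ] {f : Ω → E}
    (hf : Integrable f μ) : ∫ ω, ‖f ω - ∫ ω', f ω' ∂μ‖ ∂μ ≤ 2 * ∫ ω, ‖f ω‖ ∂μ :=
  calc ∫ ω, ‖f ω - ∫ ω', f ω' ∂μ‖ ∂μ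
      ≤ ∫ ω, (‖f ω‖ + ‖∫ ω', f ω' ∂μ‖) ∂μ :=
        integral_mono (hf.sub (integrable_const _)).norm (hf.norm.add (integrable_const _))
          fun ω => norm_sub_le _ _
    _ = ∫ ω, ‖f ω‖ ∂μ + ‖∫ ω, f ω ∂μ‖ := by
        rw [integral_add hf.norm (integrable_const _), integral_const, probReal_univ, one_smul]
    _ ≤ 2 * ∫ ω, ‖f ω‖ ∂μ := by
        linarith [norm_integral_le_integral_norm (μ := μ) f]

lemma integral_norm_smul_add_smul_le [NormedSpace 𝕜 E] {f g : Ω → E} (hf : Integrable f μ)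
    (hg : Integrable g μ) (c d : 𝕜) :
    ∫ ω, ‖c • f ω + d • g ω‖ ∂μ ≤ ‖c‖ * ∫ ω, ‖f ω‖ ∂μ + ‖d‖ * ∫ ω, ‖g ω‖ ∂μ := by
  have hcf : Integrable (fun ω => c • f ω) μ := hf.smul c
  have hdg : Integrable (fun ω => d • g ω) μ := hg.smul d
  simp only [← integral_const_mul, ← norm_smul]
  rw [← integral_add hcf.norm hdg.norm]
  exact integral_mono (hcf.add hdg).norm (hcf.norm.add hdg.norm) fun ω => norm_add_le _ _

lemma integral_norm_smul_sub_integral_add_smul_le [NormedSpace ℝ E] [NormedSpace 𝕜 E]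
    [IsProbabilityMeasure μ] {f g : Ω → E} (hf : Integrable f μ) (hg : Integrable g μ) (c d : 𝕜) :
    ∫ ω, ‖c • (f ω - ∫ ω', f ω' ∂μ) + d • g ω‖ ∂μ ≤
      ‖c‖ * (2 * ∫ ω, ‖f ω‖ ∂μ) + ‖d‖ * ∫ ω, ‖g ω‖ ∂μ := by
  refine (integral_norm_smul_add_smul_le (hf.sub (integrable_const _)) hg c d).trans ?_
  gcongr
  exact integral_norm_sub_integral_le hf

lemma integral_norm_sum_smul_le [NormedSpace 𝕜 E] {s : Finset ι} (a : ι → 𝕜) {f : ι → Ω → E}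
    {M : ℝ} (hf : ∀ i ∈ s, Integrable (f i) μ) (hM : ∀ i ∈ s, ∫ ω, ‖f i ω‖ ∂μ ≤ M) :
    ∫ ω, ‖∑ i ∈ s, a i • f i ω‖ ∂μ ≤ (∑ i ∈ s, ‖a i‖) * M := by
  have hterm : ∀ i ∈ s, Integrable (fun ω => a i • f i ω) μ := fun i hi => (hf i hi).smul _
  calc ∫ ω, ‖∑ i ∈ s, a i • f i ω‖ ∂μ
      ≤ ∫ ω, ∑ i ∈ s, ‖a i • f i ω‖ ∂μ :=
        integral_mono (integrable_finsetSum s hterm).norm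
          (integrable_finsetSum s fun i hi => (hterm i hi).norm) fun ω => norm_sum_le _ _
    _ = ∑ i ∈ s, ‖a i‖ * ∫ ω, ‖f i ω‖ ∂μ := by
        rw [integral_finsetSum s fun i hi => (hterm i hi).norm]
        simp only [norm_smul, integral_const_mul]
    _ ≤ (∑ i ∈ s, ‖a i‖) * M := by
        rw [Finset.sum_mul]
        gcongr with i hi
        exact hM i hi

lemma sum_mul_mul_sum_mul_eq_sum_product (s : Finset ι) (t : Finset κ) (a x : ι → 𝕜)
    (b y : κ → 𝕜) :
    (∑ j ∈ s, a j * x j) * ∑ k ∈ t, b k * y k =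
      ∑ p ∈ s ×ˢ t, (a p.1 * b p.2) • (x p.1 * y p.2) := by
  simp only [Finset.sum_mul_sum, Finset.sum_product, smul_eq_mul, mul_mul_mul_comm]

variable {s : Finset ι} {t : Finset κ} {X : ι → Ω → 𝕜} {Y : κ → Ω → 𝕜}

lemma integrable_sum_mul_mul_sum_mul (a : ι → 𝕜) (b : κ → 𝕜)
    (hint : ∀ j ∈ s, ∀ k ∈ t, Integrable (fun ω => X j ω * Y k ω) μ) :
    Integrable (fun ω => (∑ j ∈ s, a j * X j ω) * ∑ k ∈ t, b k * Y k ω) μ := by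
  simp only [sum_mul_mul_sum_mul_eq_sum_product]
  refine integrable_finsetSum _ fun p hp => ?_
  obtain ⟨hj, hk⟩ := Finset.mem_product.1 hp
  exact (hint _ hj _ hk).smul (a p.1 * b p.2)

lemma integral_norm_sum_mul_mul_sum_mul_le (a : ι → 𝕜) (b : κ → 𝕜) {M : ℝ}
    (hint : ∀ j ∈ s, ∀ k ∈ t, Integrable (fun ω => X j ω * Y k ω) μ)
    (hM : ∀ j ∈ s, ∀ k ∈ t, ∫ ω, ‖X j ω * Y k ω‖ ∂μ ≤ M) :
    ∫ ω, ‖(∑ j ∈ s, a j * X j ω) * ∑ k ∈ t, b k * Y k ω‖ ∂μ ≤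
      (∑ j ∈ s, ‖a j‖) * (∑ k ∈ t, ‖b k‖) * M := by
  simp only [sum_mul_mul_sum_mul_eq_sum_product]
  rw [Finset.sum_mul_sum, ← Finset.sum_product']
  simp only [← norm_mul]
  refine integral_norm_sum_smul_le (fun p : ι × κ => a p.1 * b p.2)
    (f := fun p ω => X p.1 ω * Y p.2 ω) (fun p hp => ?_) fun p hp => ?_ <;>
    obtain ⟨hj, hk⟩ := Finset.mem_product.1 hp
  · exact hint _ hj _ hk
  · exact hM _ hj _ hk

end LOne

/-- The exponentially weighted sum `Σ_{j=a}^l ρ^{l−j} U_j` of the innovations in the window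
`[a, l]`; `Utilde ρ U l` is definitionally the case `a = 1`. -/
def windowSum {Ω R : Type*} [Semiring R] (ρ : R) (U : ℕ → Ω → R) (a l : ℕ) (ω : Ω) : R :=
  ∑ j ∈ Finset.Icc a l, ρ ^ (l - j) * U j ω

section WindowSum

variable {Ω 𝕜 : Type*} [MeasurableSpace Ω] {μ : Measure Ω} [NormedField 𝕜] {U V : ℕ → Ω → 𝕜}
  {a b l n : ℕ}

lemma integrable_windowSum_mul_windowSum (ρ σ : 𝕜)
    (hint : ∀ j ∈ Finset.Icc a l, ∀ k ∈ Finset.Icc b n, Integrable (fun ω => U j ω * V k ω) μ) :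
    Integrable (fun ω => windowSum ρ U a l ω * windowSum σ V b n ω) μ :=
  integrable_sum_mul_mul_sum_mul _ _ hint

lemma integral_norm_windowSum_mul_windowSum_le {ρ σ : 𝕜} (hρ : ‖ρ‖ < 1) (hσ : ‖σ‖ < 1) {M : ℝ}
    (hM : 0 ≤ M)
    (hint : ∀ j ∈ Finset.Icc a l, ∀ k ∈ Finset.Icc b n, Integrable (fun ω => U j ω * V k ω) μ)
    (hbd : ∀ j ∈ Finset.Icc a l, ∀ k ∈ Finset.Icc b n, ∫ ω, ‖U j ω * V k ω‖ ∂μ ≤ M) :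
    ∫ ω, ‖windowSum ρ U a l ω * windowSum σ V b n ω‖ ∂μ ≤ (1 - ‖ρ‖)⁻¹ * (1 - ‖σ‖)⁻¹ * M := by
  refine (integral_norm_sum_mul_mul_sum_mul_le _ _ hint hbd).trans ?_
  simp only [norm_pow]
  have hρ_weights := sum_Icc_pow_sub_le (norm_nonneg ρ) hρ a l
  have hσ_weights := sum_Icc_pow_sub_le (norm_nonneg σ) hσ b n
  exact mul_le_mul_of_nonneg_right (mul_le_mul hρ_weights hσ_weights
    (Finset.sum_nonneg fun k _ => by positivity) (inv_nonneg.2 (sub_nonneg.2 hρ.le))) hM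

end WindowSum

theorem stmt_18_general {Ω : Type*} [MeasurableSpace Ω] (P : Measure Ω) [IsProbabilityMeasure P]
    (M ρ : ℝ) (hρ : |ρ| < 1) (U : ℕ → Ω → ℝ)
    (hint : ∀ j k : ℕ, 1 ≤ j → 1 ≤ k → Integrable (fun ω => U j ω * U k ω) P)
    (hbd : ∀ j k : ℕ, 1 ≤ j → 1 ≤ k → (∫ ω, |U j ω * U k ω| ∂P) ≤ M) (i m : ℕ) (hm : m < i) :
    (∫ ω,
        |ρ ^ (2 * m + 2) *
            ((Utilde ρ U (i - m - 1) ω) ^ 2 -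
              ∫ ω', (Utilde ρ U (i - m - 1) ω') ^ 2 ∂P) +
          2 * ρ ^ (m + 1) * Utilde ρ U (i - m - 1) ω *
            ∑ j ∈ Finset.Icc (i - m) i, ρ ^ (i - j) * U j ω| ∂P) ≤
      2 * M * ((1 - |ρ|) ^ 2)⁻¹ * (|ρ| ^ (2 * m + 2) + |ρ| ^ (m + 1)) := by
  set X := Utilde ρ U (i - m - 1)
  have hM : 0 ≤ M := (integral_nonneg fun ω => abs_nonneg _).trans (hbd 1 1 le_rfl le_rfl)
  have mul_window_integrable (a n : ℕ) (ha : 1 ≤ a) :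
      Integrable (fun ω => X ω * windowSum ρ U a n ω) P :=
    integrable_windowSum_mul_windowSum ρ ρ fun j hj k hk =>
      hint j k (Finset.mem_Icc.1 hj).1 (ha.trans (Finset.mem_Icc.1 hk).1)
  have mul_window_le (a n : ℕ) (ha : 1 ≤ a) :
      ∫ ω, ‖X ω * windowSum ρ U a n ω‖ ∂P ≤ (1 - |ρ|)⁻¹ * (1 - |ρ|)⁻¹ * M :=
    integral_norm_windowSum_mul_windowSum_le hρ hρ hM
      (fun j hj k hk => hint j k (Finset.mem_Icc.1 hj).1 (ha.trans (Finset.mem_Icc.1 hk).1))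
      fun j hj k hk => hbd j k (Finset.mem_Icc.1 hj).1 (ha.trans (Finset.mem_Icc.1 hk).1)
  have one_le_window_start : 1 ≤ i - m := by lia
  simp only [sq (X _), mul_assoc _ (X _)]
  calc _ ≤ ‖ρ ^ (2 * m + 2)‖ * (2 * ∫ ω, ‖X ω * X ω‖ ∂P) +
        ‖2 * ρ ^ (m + 1)‖ * ∫ ω, ‖X ω * windowSum ρ U (i - m) i ω‖ ∂P :=
        integral_norm_smul_sub_integral_add_smul_le (mul_window_integrable 1 _ le_rfl)
          (mul_window_integrable _ i one_le_window_start) _ _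
    _ ≤ ‖ρ ^ (2 * m + 2)‖ * (2 * ((1 - |ρ|)⁻¹ * (1 - |ρ|)⁻¹ * M)) +
        ‖2 * ρ ^ (m + 1)‖ * ((1 - |ρ|)⁻¹ * (1 - |ρ|)⁻¹ * M) := by
        gcongr
        · exact mul_window_le 1 _ le_rfl
        · exact mul_window_le _ i one_le_window_start
    _ = _ := by
        rw [norm_mul, norm_pow, norm_pow, Real.norm_two, Real.norm_eq_abs, ← mul_inv, ← sq]
        ring

theorem stmt_18 {Ω : Type*} [MeasurableSpace Ω] (P : Measure Ω)
    [IsProbabilityMeasure P] (M : ℝ) (hM : 0 < M) (ρ : ℝ)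
    (hρ : ρ ∈ Set.Ioo (0 : ℝ) 1) (U : ℕ → Ω → ℝ)
    (hint : ∀ j k : ℕ, 1 ≤ j → 1 ≤ k →
      Integrable (fun ω => U j ω * U k ω) P)
    (hbd : ∀ j k : ℕ, 1 ≤ j → 1 ≤ k → (∫ ω, |U j ω * U k ω| ∂P) ≤ M) :
    ∀ i m : ℕ, m + 1 < i →
      (∫ ω,
          |ρ ^ (2 * m + 2) *
              ((Utilde ρ U (i - m - 1) ω) ^ 2 -
                ∫ ω', (Utilde ρ U (i - m - 1) ω') ^ 2 ∂P) +
            2 * ρ ^ (m + 1) * Utilde ρ U (i - m - 1) ω *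
              ∑ j ∈ Finset.Icc (i - m) i, ρ ^ (i - j) * U j ω| ∂P) ≤
        2 * M * ((1 - ρ) ^ 2)⁻¹ * (ρ ^ (2 * m + 2) + ρ ^ (m + 1)) := by
  intro i m hm
  have hρ_abs : |ρ| = ρ := abs_of_pos hρ.1
  simpa only [hρ_abs] using
    stmt_18_general P M ρ (hρ_abs.trans_lt hρ.2) U hint hbd i m (m.lt_succ_self.trans hm)
end
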